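/- Let α > 0, β > 0 with α ≠ β, and let (ρ_n) and (r_n) be sequences of positive reals with ρ_n → 0 and r_n²·ρ_n → ∞. Then the Rényi-1/2 divergence I_n = −2 r_n² · log( √((1−αρ_n)(1−βρ_n)) + ρ_n√(αβ) ) tends to +∞ as n → ∞. -/

import Mathlib

open Filter

/-!
The affinity of two Bernoulli laws is one minus their squared Hellinger distance, which is at least
`(√p - √q)² / 2`. With `log x ≤ x - 1`, the Rényi-1/2 divergence of the `N`-fold laws is therefore
at least `N (√p - √q)²`. For `p = αρ` and `q = βρ` this bound is `(√α - √β)² Nρ → ∞`.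
-/

/-- The Hellinger affinity (Bhattacharyya coefficient) `∑ₓ √(P x * Q x)` of the Bernoulli laws with
success probabilities `p` and `q`. -/
noncomputable def bernoulliAffinity (p q : ℝ) : ℝ :=
  √((1 - p) * (1 - q)) + √(p * q)

/-- The Rényi divergence of order `1/2` between the binomial laws with `N` trials and success
probabilities `p` and `q`. The affinity of the binomial laws is the `N`-th power of that of the
Bernoulli laws, so the formula is linear in `N`; `N` may be any real number. -/
noncomputable def binomialRenyiHalf (N p q : ℝ) : ℝ :=
  -2 * N * Real.log (bernoulliAffinity p q)

lemma sqrt_mul_eq_half_add_sub_half_sq_sub_sqrt {a b : ℝ} (ha : 0 ≤ a) (hb : 0 ≤ b) :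
    √(a * b) = (a + b) / 2 - (√a - √b) ^ 2 / 2 := by
  rw [Real.sqrt_mul ha, sub_sq, Real.sq_sqrt ha, Real.sq_sqrt hb]
  ring

lemma sq_sqrt_mul_sub_sqrt_mul {a b t : ℝ} (ha : 0 ≤ a) (hb : 0 ≤ b) (ht : 0 ≤ t) :
    (√(a * t) - √(b * t)) ^ 2 = (√a - √b) ^ 2 * t := by
  rw [Real.sqrt_mul ha, Real.sqrt_mul hb, ← sub_mul, mul_pow, Real.sq_sqrt ht]

lemma bernoulliAffinity_mul_right (α β : ℝ) {t : ℝ} (ht : 0 ≤ t) :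
    bernoulliAffinity (α * t) (β * t) = √((1 - α * t) * (1 - β * t)) + t * √(α * β) := by
  rw [bernoulliAffinity, mul_mul_mul_comm α t β t, mul_comm (α * β),
    Real.sqrt_mul (mul_self_nonneg t), Real.sqrt_mul_self ht]

section Bernoulli

variable {p q : ℝ}

lemma bernoulliAffinity_pos (hp : p < 1) (hq : q < 1) : 0 < bernoulliAffinity p q :=
  add_pos_of_pos_of_nonneg (Real.sqrt_pos.2 (mul_pos (sub_pos.2 hp) (sub_pos.2 hq)))
    (Real.sqrt_nonneg _)

lemma bernoulliAffinity_eq_one_sub_sq_hellinger (hp : p ∈ Set.Icc 0 1) (hq : q ∈ Set.Icc 0 1) :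
    bernoulliAffinity p q = 1 - ((√p - √q) ^ 2 + (√(1 - p) - √(1 - q)) ^ 2) / 2 := by
  rw [bernoulliAffinity, sqrt_mul_eq_half_add_sub_half_sq_sub_sqrt hp.1 hq.1,
    sqrt_mul_eq_half_add_sub_half_sq_sub_sqrt (sub_nonneg.2 hp.2) (sub_nonneg.2 hq.2)]
  ring

lemma log_bernoulliAffinity_le (hp : p ∈ Set.Ico 0 1) (hq : q ∈ Set.Ico 0 1) :
    Real.log (bernoulliAffinity p q) ≤ -((√p - √q) ^ 2 / 2) :=
  calc Real.log (bernoulliAffinity p q)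
    _ ≤ bernoulliAffinity p q - 1 :=
      Real.log_le_sub_one_of_pos (bernoulliAffinity_pos hp.2 hq.2)
    _ = -((√p - √q) ^ 2 / 2) - (√(1 - p) - √(1 - q)) ^ 2 / 2 := by
      rw [bernoulliAffinity_eq_one_sub_sq_hellinger (Set.Ico_subset_Icc_self hp)
        (Set.Ico_subset_Icc_self hq)]
      ring
    _ ≤ -((√p - √q) ^ 2 / 2) := sub_le_self _ (by positivity)

lemma mul_sq_sub_sqrt_le_binomialRenyiHalf {N : ℝ} (hN : 0 ≤ N) (hp : p ∈ Set.Ico 0 1)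
    (hq : q ∈ Set.Ico 0 1) : N * (√p - √q) ^ 2 ≤ binomialRenyiHalf N p q := by
  have := mul_le_mul_of_nonneg_left (log_bernoulliAffinity_le hp hq) hN
  rw [binomialRenyiHalf]
  linarith

end Bernoulli

section Limit

variable {ι : Type*} {l : Filter ι}

lemma tendsto_binomialRenyiHalf_atTop {N p q : ι → ℝ} (hN : ∀ᶠ i in l, 0 ≤ N i)
    (hp : ∀ᶠ i in l, p i ∈ Set.Ico 0 1) (hq : ∀ᶠ i in l, q i ∈ Set.Ico 0 1)
    (h : Tendsto (fun i => N i * (√(p i) - √(q i)) ^ 2) l atTop) :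
    Tendsto (fun i => binomialRenyiHalf (N i) (p i) (q i)) l atTop := by
  refine tendsto_atTop_mono' l ?_ h
  filter_upwards [hN, hp, hq] with i hNi hpi hqi
  exact mul_sq_sub_sqrt_le_binomialRenyiHalf hNi hpi hqi

lemma eventually_mul_mem_Ico_zero_one {c : ℝ} {ρ : ι → ℝ} (hc : 0 ≤ c)
    (hρ : ∀ᶠ i in l, 0 ≤ ρ i) (hρ0 : Tendsto ρ l (nhds 0)) :
    ∀ᶠ i in l, c * ρ i ∈ Set.Ico 0 1 := by
  have hcρ : Tendsto (fun i => c * ρ i) l (nhds 0) := by simpa using hρ0.const_mul c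
  filter_upwards [hρ, hcρ.eventually_lt_const one_pos] with i hρi hlt
  exact ⟨mul_nonneg hc hρi, hlt⟩

theorem renyi_half_tendsto_atTop_general {α β : ℝ} (hα : 0 ≤ α) (hβ : 0 ≤ β) (hαβ : α ≠ β)
    {ρ N : ι → ℝ} (hN : ∀ᶠ i in l, 0 ≤ N i) (hρ0 : Tendsto ρ l (nhds 0))
    (hNρ : Tendsto (fun i => N i * ρ i) l atTop) :
    Tendsto (fun i => -2 * N i *
        Real.log (√((1 - α * ρ i) * (1 - β * ρ i)) + ρ i * √(α * β))) l atTop := by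
  have hρ : ∀ᶠ i in l, 0 ≤ ρ i := by
    filter_upwards [hN, hNρ.eventually_gt_atTop 0] with i hNi hNρi
    exact (pos_of_mul_pos_right hNρi hNi).le
  have hgap : 0 < (√α - √β) ^ 2 :=
    sq_pos_of_ne_zero (sub_ne_zero.2 ((Real.sqrt_inj hα hβ).not.2 hαβ))
  have hbound : Tendsto (fun i => N i * (√(α * ρ i) - √(β * ρ i)) ^ 2) l atTop := by
    refine (hNρ.const_mul_atTop hgap).congr' ?_
    filter_upwards [hρ] with i hρi
    rw [sq_sqrt_mul_sub_sqrt_mul hα hβ hρi, mul_left_comm]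
  refine (tendsto_binomialRenyiHalf_atTop hN (eventually_mul_mem_Ico_zero_one hα hρ hρ0)
    (eventually_mul_mem_Ico_zero_one hβ hρ hρ0) hbound).congr' ?_
  filter_upwards [hρ] with i hρi
  rw [binomialRenyiHalf, bernoulliAffinity_mul_right α β hρi]

end Limit

/-- If `α, β > 0`, `α ≠ β`, `ρ_n → 0` and `r_n²ρ_n → ∞`, then the
Rényi-1/2 divergence `I_n = −2r_n²·log(√((1−αρ_n)(1−βρ_n)) + ρ_n√(αβ))` tends to `+∞`. -/
theorem renyi_half_tendsto_atTop
    (α β : ℝ) (hα : 0 < α) (hβ : 0 < β) (hαβ : α ≠ β)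
    (ρ r : ℕ → ℝ) (hρpos : ∀ n, 0 < ρ n) (hrpos : ∀ n, 0 < r n)
    (hρ0 : Tendsto ρ atTop (nhds 0))
    (hr2ρ : Tendsto (fun n => r n ^ 2 * ρ n) atTop atTop) :
    Tendsto (fun n => -2 * r n ^ 2 *
        Real.log (Real.sqrt ((1 - α * ρ n) * (1 - β * ρ n)) + ρ n * Real.sqrt (α * β)))
      atTop atTop :=
  renyi_half_tendsto_atTop_general hα.le hβ.le hαβ (.of_forall fun n => sq_nonneg (r n)) hρ0 hr2ρ
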